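/- Let F be a field of characteristic 2, K/F a purely inseparable extension of exponent 1 (K² ⊆ F), B a bilinear Pfister form over F, and ρ a nonsingular quadratic form over K such that B_K ⊗ ρ is defined over F, i.e. there exists a quadratic form φ over F with φ_K ≅ B_K ⊗ ρ. Then there exists a nonsingular quadratic form ρ₀ over F with φ_K ≅ B_K ⊗ ρ ≅ (B ⊗ ρ₀)_K. -/

import Mathlib

/-!  A concrete coefficient-matrix model of (possibly singular) finite-dimensional
quadratic forms over a field, suitable for characteristic 2. -/

/-- Coefficient representation of a (finite-dimensional) quadratic form over a field `F`:
the form of dimension `dim` given by `q(x) = ∑ i j, c i j * x i * x j`. -/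
structure QF (F : Type*) [Field F] : Type _ where
  dim : ℕ
  c : Matrix (Fin dim) (Fin dim) F

namespace QF

variable {F E : Type*} [Field F] [Field E]

/-- Evaluation of the quadratic form at a vector. -/
def eval (q : QF F) (x : Fin q.dim → F) : F :=
  ∑ i, ∑ j, q.c i j * x i * x j

/-- Scalar extension (base change) of a quadratic form along a ring homomorphism. -/
def map (f : F →+* E) (q : QF F) : QF E :=
  ⟨q.dim, fun i j => f (q.c i j)⟩

/-- Orthogonal sum. -/
def orthSum (q q' : QF F) : QF F :=
  ⟨q.dim + q'.dim,
    Matrix.reindex finSumFinEquiv finSumFinEquiv (Matrix.fromBlocks q.c 0 0 q'.c)⟩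

/-- Scaling `a • q`. -/
def smul (a : F) (q : QF F) : QF F := ⟨q.dim, a • q.c⟩

/-- The nonsingular binary quadratic form `[a,b] : (x,y) ↦ ax² + xy + by²`. -/
def bin (a b : F) : QF F := ⟨2, !![a, 1; 0, b]⟩

/-- The diagonal (totally singular) quadratic form `⟨a₁, …, aₙ⟩`. -/
def diag {n : ℕ} (v : Fin n → F) : QF F := ⟨n, Matrix.diagonal v⟩

/-- The zero-dimensional quadratic form. -/
def nil : QF F := { dim := 0, c := 0 }

/-- The one-dimensional form `⟨1⟩`. -/
def unit : QF F := diag (fun _ : Fin 1 => (1 : F))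

/-- Orthogonal sum of a list of forms. -/
def sumList (l : List (QF F)) : QF F := l.foldr orthSum nil

/-- `pfTensor [a₁,…,aₙ] q` is the tensor product `⟨⟨a₁,…,aₙ⟩⟩_b ⊗ q` of the bilinear
Pfister form `⟨⟨a₁,…,aₙ⟩⟩_b = ⟨1,a₁⟩_b ⊗ ⋯ ⊗ ⟨1,aₙ⟩_b` with the quadratic form `q`,
via `⟨1,a⟩_b ⊗ q ≅ q ⊥ a·q`. -/
def pfTensor (l : List F) (q : QF F) : QF F :=
  l.foldr (fun a r => orthSum r (smul a r)) q

/-- The hyperbolic plane `ℍ ≅ [0,0]`. -/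
def hypPlane : QF F := bin 0 0

/-- The orthogonal sum of `k` hyperbolic planes. -/
def hyp (k : ℕ) : QF F := sumList (List.replicate k hypPlane)

/-- The `l`-dimensional zero form `⟨0,…,0⟩`. -/
def zeros (l : ℕ) : QF F := diag (fun _ : Fin l => (0 : F))

/-- Isometry of quadratic forms. -/
def Isometric (q q' : QF F) : Prop :=
  ∃ e : (Fin q.dim → F) ≃ₗ[F] (Fin q'.dim → F), ∀ x, q'.eval (e x) = q.eval x

/-- Anisotropy: the form has no nontrivial zero. -/
def Anisotropic (q : QF F) : Prop := ∀ x, q.eval x = 0 → x = 0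

/-- A quadratic form is nonsingular if the radical of its polar form
`B_q(x,y) = q(x+y) - q(x) - q(y)` (with matrix `c + cᵀ`) is trivial. -/
def Nonsingular (q : QF F) : Prop := ∀ x, (q.c + q.c.transpose).mulVec x = 0 → x = 0

/-- A quadratic form is totally singular if its polar form vanishes identically. -/
def TotallySingular (q : QF F) : Prop := q.c + q.c.transpose = 0

/-- A quadratic form is hyperbolic if it is isometric to an orthogonal sum of
hyperbolic planes. -/
def Hyperbolic (q : QF F) : Prop := ∃ k, Isometric q (hyp k)

/-- Witt equivalence: `q ~ q'` iff the anisotropic parts agree, equivalently the two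
forms become isometric after adding suitable numbers of hyperbolic planes and zero
forms. -/
def WittEquiv (q q' : QF F) : Prop :=
  ∃ k k' l l', Isometric (orthSum q (orthSum (hyp k) (zeros l)))
    (orthSum q' (orthSum (hyp k') (zeros l')))

/-- `AnisoPartOf φ q` : `φ` is (isometric to) the anisotropic part of `q`, i.e. `φ` is
anisotropic and `q ≅ k × ℍ ⊥ φ ⊥ ⟨0,…,0⟩`. -/
def AnisoPartOf (φ q : QF F) : Prop :=
  Anisotropic φ ∧ ∃ k l, Isometric q (orthSum (hyp k) (orthSum φ (zeros l)))

/-- `Dominates q' q` means `q ≺ q'`, i.e. `q'` dominates `q`: there is an injective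
linear map `t` of the underlying spaces with `q' ∘ t = q`. -/
def Dominates (q' q : QF F) : Prop :=
  ∃ t : (Fin q.dim → F) →ₗ[F] (Fin q'.dim → F), Function.Injective t ∧
    ∀ x, q'.eval (t x) = q.eval x

/-- The affine quadric polynomial `∑ cᵢⱼ XᵢXⱼ` of a quadratic form. -/
noncomputable def toPoly (q : QF F) : MvPolynomial (Fin q.dim) F :=
  ∑ i, ∑ j, MvPolynomial.C (q.c i j) * (MvPolynomial.X i * MvPolynomial.X j)

/-- The affine coordinate ring of the (reduced) quadric `q = 0`. -/
abbrev CoordRing (q : QF F) : Type _ :=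
  MvPolynomial (Fin q.dim) F ⧸ (Ideal.span {q.toPoly}).radical

/-- The function field of the quadric `q = 0` (assuming the quadric is integral). -/
abbrev FunctionField (q : QF F) [IsDomain (CoordRing q)] : Type _ :=
  FractionRing (CoordRing q)

/-- The canonical ring homomorphism from a base field `F` into the function field of a
quadric defined over an extension field `K` of `F`. -/
noncomputable def toFunctionField {K : Type*} [Field K] [Algebra F K] (q : QF K)
    [IsDomain (CoordRing q)] : F →+* FunctionField q :=
  (algebraMap (CoordRing q) (FunctionField q)).comp
    ((algebraMap K (CoordRing q)).comp (algebraMap F K))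

end QF

/-!
Isometry classes of quadratic forms are a commutative monoid under orthogonal sum, and isometries
are obtained by calculating in it.

Let `f : F →+* K` be the inclusion. Call a subspace which is its own orthogonal complement for the
polar form a Lagrangian. A nonsingular form over `K` is defined over `F` if and only if it has a
Lagrangian on which it takes values in `F`: in one direction `K² ⊆ F` makes the first axes of the
summands `[c, x]` with `c ∈ F` span one, in the other the form is a sum of binary forms `[e, x]`
with `e ∈ F`, and `[e, x] ≅ [e, e x²]` descends because `x² ∈ F`.

So let `L` be such a Lagrangian of `B ⊗ ρ`. If `B ⊗ ρ` has a nonzero value `e ∈ F` on `L`, then,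
as Pfister multiples of `[1, b]` are round, `B ⊗ ρ ≅ B ⊗ ([e, x] ⊥ ρ')` for some `x` and `ρ'`.
Reduction modulo the Lagrangian of `B ⊗ [e, x]` produces a Lagrangian of `B ⊗ ρ'` with values in
`F`, and induction on the dimension applies to `ρ'`. If `B ⊗ ρ` vanishes on `L`, it is hyperbolic,
and `ρ` can be replaced by a hyperbolic form of the same dimension.
-/

open QuadraticMap
open scoped Pointwise

/-! ### Lagrangians -/

section Polar

variable {R V W : Type*} [CommRing R] [AddCommGroup V] [Module R V] [AddCommGroup W] [Module R W]
  {Q : QuadraticForm R V} {Q' : QuadraticForm R W}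

theorem polar_isometryEquiv (e : Q.IsometryEquiv Q') (x y : V) :
    polar Q' (e x) (e y) = polar Q x y := by
  simp only [polar, ← map_add, e.map_app]

theorem polar_isometryEquiv_symm (e : Q.IsometryEquiv Q') (x : V) (y : W) :
    polar Q x (e.symm y) = polar Q' (e x) y := by
  rw [← polar_isometryEquiv e, e.apply_symm_apply]

theorem separatingLeft_polarBilin_of_equivalent (h : Q.Equivalent Q')
    (hQ' : Q'.polarBilin.SeparatingLeft) : Q.polarBilin.SeparatingLeft := by
  obtain ⟨e⟩ := h
  intro x hx
  refine e.toLinearEquiv.map_eq_zero_iff.1 (hQ' _ fun y => ?_)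
  exact (polar_isometryEquiv_symm e x y).symm.trans (hx _)

theorem separatingLeft_polarBilin_prod_iff :
    (Q.prod Q').polarBilin.SeparatingLeft ↔
      Q.polarBilin.SeparatingLeft ∧ Q'.polarBilin.SeparatingLeft := by
  simp only [LinearMap.SeparatingLeft, polarBilin_apply_apply, polar_prod]
  constructor
  · refine fun h => ⟨fun x hx => ?_, fun x hx => ?_⟩
    · exact congrArg Prod.fst (h (x, 0) fun y => by simp [hx])
    · exact congrArg Prod.snd (h (0, x) fun y => by simp [hx])
  · rintro ⟨h, h'⟩ ⟨x, x'⟩ hx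
    refine Prod.ext (h x fun y => ?_) (h' x' fun y => ?_)
    · simpa using hx (y, 0)
    · simpa using hx (0, y)

theorem equivalent_smul (a : R) (h : Q.Equivalent Q') : (a • Q).Equivalent (a • Q') :=
  h.map fun e => ⟨e.toLinearEquiv, fun x => congrArg (a • ·) (e.map_app x)⟩

/-- `Q` has a Lagrangian with values in `S`: a subspace which is its own orthogonal complement
for the polar form of `Q`, and all of whose values lie in `S`. For `S = ⊥` this is the usual
notion of a Lagrangian of a quadratic form. -/
def HasLagrangianIn (S : AddSubgroup R) (Q : QuadraticForm R V) : Prop :=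
  ∃ L : Submodule R V, L.orthogonalBilin Q.polarBilin = L ∧ ∀ x ∈ L, Q x ∈ S

theorem mem_iff_of_orthogonalBilin_eq {L : Submodule R V}
    (hL : L.orthogonalBilin Q.polarBilin = L) (x : V) :
    x ∈ L ↔ ∀ y ∈ L, polar Q y x = 0 := by
  conv_lhs => rw [← hL]
  rfl

namespace HasLagrangianIn

variable {S : AddSubgroup R}

theorem of_equivalent (h : Q.Equivalent Q') (hQ : HasLagrangianIn S Q) :
    HasLagrangianIn S Q' := by
  obtain ⟨e⟩ := h
  obtain ⟨L, hL, hLS⟩ := hQ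
  refine ⟨L.comap e.symm.toLinearEquiv.toLinearMap, ?_, fun y hy => ?_⟩
  · ext y
    refine Iff.trans ⟨fun h x hx => ?_, fun h x hx => ?_⟩
      (mem_iff_of_orthogonalBilin_eq hL (e.symm y)).symm
    · rw [polar_isometryEquiv_symm]
      exact h (e x) ((congrArg (· ∈ L) (e.symm_apply_apply x)).mpr hx)
    · rw [← e.apply_symm_apply x]
      exact (polar_isometryEquiv_symm e _ y).symm.trans (h _ hx)
  · exact (e.symm.map_app y) ▸ hLS _ hy

theorem prod (hQ : HasLagrangianIn S Q) (hQ' : HasLagrangianIn S Q') :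
    HasLagrangianIn S (Q.prod Q') := by
  obtain ⟨L, hL, hLS⟩ := hQ
  obtain ⟨M, hM, hMS⟩ := hQ'
  refine ⟨L.prod M, ?_, fun x hx => S.add_mem (hLS _ hx.1) (hMS _ hx.2)⟩
  ext x
  rw [Submodule.mem_prod, ← hL, ← hM]
  simp only [Submodule.mem_orthogonalBilin_iff, polarBilin_apply_apply, polar_prod]
  refine ⟨fun h => ⟨fun y hy => ?_, fun y hy => ?_⟩, fun h y hy => ?_⟩
  · simpa using h (y, 0) (by rw [hL, hM]; exact ⟨hy, M.zero_mem⟩)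
  · simpa using h (0, y) (by rw [hL, hM]; exact ⟨L.zero_mem, hy⟩)
  · rw [hL, hM] at hy
    rw [h.1 _ hy.1, h.2 _ hy.2, add_zero]

theorem smul [NoZeroDivisors R] {a : R} (ha : a ≠ 0) (hS : ∀ s ∈ S, a * s ∈ S)
    (hQ : HasLagrangianIn S Q) : HasLagrangianIn S (a • Q) := by
  obtain ⟨L, hL, hLS⟩ := hQ
  refine ⟨L, ?_, fun x hx => hS _ (hLS x hx)⟩
  conv_rhs => rw [← hL]
  ext x
  simp only [Submodule.mem_orthogonalBilin_iff, polarBilin_apply_apply, FunLike.coe_smul,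
    polar_smul, smul_eq_mul, mul_eq_zero, ha, false_or]

end HasLagrangianIn

end Polar

section PolarField

variable {K V W : Type*} [Field K] [AddCommGroup V] [Module K V] [AddCommGroup W] [Module K W]
  {Q : QuadraticForm K V} {Q' : QuadraticForm K W}

theorem exists_forall_apply_eq_of_ker_le [FiniteDimensional K W] {B : V →ₗ[K] W →ₗ[K] K}
    {f : V →ₗ[K] K} (h : LinearMap.ker B ≤ LinearMap.ker f) : ∃ w, ∀ v, B v w = f v := by
  have hf : f ∈ (LinearMap.ker B).dualAnnihilator :=
    (Submodule.mem_dualAnnihilator f).2 fun v hv => h hv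
  rw [LinearMap.dualAnnihilator_ker_eq_range_flip] at hf
  exact hf.imp fun w hw v => LinearMap.congr_fun hw v

theorem exists_polar_eq_one (hQ : Q.polarBilin.SeparatingLeft) {v : V} (hv : v ≠ 0) :
    ∃ w, polar Q v w = 1 := by
  obtain ⟨w, hw⟩ : ∃ w, polar Q v w ≠ 0 := by
    by_contra! h
    exact hv (hQ v h)
  exact ⟨(polar Q v w)⁻¹ • w, by rw [polar_smul_right, smul_eq_mul, inv_mul_cancel₀ hw]⟩

/-- A Lagrangian `L` of `Q ⊥ Q'` is reduced modulo a Lagrangian `M` of `Q` to the Lagrangian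
`{w | ∃ u ∈ M, (u, w) ∈ L}` of `Q'`. -/
theorem HasLagrangianIn.of_prod [FiniteDimensional K V] {S : AddSubgroup K}
    (h : HasLagrangianIn S (Q.prod Q')) (hQ : HasLagrangianIn S Q) : HasLagrangianIn S Q' := by
  obtain ⟨L, hL, hLS⟩ := h
  obtain ⟨M, hM, hMS⟩ := hQ
  have mem_L (x : V × W) : x ∈ L ↔ ∀ y ∈ L, polar Q y.1 x.1 + polar Q' y.2 x.2 = 0 := by
    simp only [mem_iff_of_orthogonalBilin_eq hL x, polar_prod]
  have mem_M := mem_iff_of_orthogonalBilin_eq hM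
  let N : Submodule K W := (L ⊓ M.comap (LinearMap.fst K V W)).map (LinearMap.snd K V W)
  have mem_N (w : W) : w ∈ N ↔ ∃ u ∈ M, (u, w) ∈ L := by
    simp [N, and_comm]
  refine ⟨N, Submodule.ext fun w => ?_, fun w hw => ?_⟩
  · simp only [Submodule.mem_orthogonalBilin_iff, mem_N, polarBilin_apply_apply]
    refine ⟨fun hw => ?_, ?_⟩
    · let B : L →ₗ[K] M →ₗ[K] K := Q.polarBilin.compl₁₂ (LinearMap.fst K V W ∘ₗ L.subtype) M.subtype
      let f : L →ₗ[K] K := -(Q'.polarBilin.flip w ∘ₗ LinearMap.snd K V W ∘ₗ L.subtype)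
      have hBf : LinearMap.ker B ≤ LinearMap.ker f := fun y hy => by
        have hyM : y.1.1 ∈ M := (mem_M _).2 fun u' hu' =>
          (polar_comm _ _ _).trans (LinearMap.congr_fun hy ⟨u', hu'⟩)
        exact neg_eq_zero.2 (hw _ ⟨_, hyM, y.2⟩)
      obtain ⟨u, hu⟩ := exists_forall_apply_eq_of_ker_le hBf
      exact ⟨u, u.2, (mem_L _).2 fun y hy => eq_neg_iff_add_eq_zero.1 (hu ⟨y, hy⟩)⟩
    · rintro ⟨u, hu, huw⟩ w' ⟨u', hu', huw'⟩
      simpa [(mem_M u).1 hu u' hu'] using (mem_L _).1 huw _ huw'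
  · obtain ⟨u, hu, huw⟩ := (mem_N w).1 hw
    simpa using S.sub_mem (hLS _ huw) (hMS u hu)

end PolarField

namespace QF

variable {K : Type*} [Field K]

/-- The quadratic form with coefficient matrix `q.c`, as an object of Mathlib. -/
noncomputable def toForm (q : QF K) : QuadraticForm K (Fin q.dim → K) :=
  (Matrix.toBilin' q.c).toQuadraticMap

theorem toForm_apply (q : QF K) (x : Fin q.dim → K) : q.toForm x = q.eval x := by
  simp only [toForm, LinearMap.BilinMap.toQuadraticMap_apply, Matrix.toBilin'_apply, eval]
  exact Finset.sum_congr rfl fun i _ => Finset.sum_congr rfl fun j _ => by ring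

theorem polar_toForm (q : QF K) (x y : Fin q.dim → K) :
    polar q.toForm x y = y ⬝ᵥ (q.c + q.c.transpose).mulVec x := by
  simp only [toForm, LinearMap.BilinMap.polar_toQuadraticMap, Matrix.toBilin'_apply']
  rw [Matrix.add_mulVec, dotProduct_add, Matrix.mulVec_transpose, add_comm,
    dotProduct_comm y (Matrix.vecMul x q.c), ← Matrix.dotProduct_mulVec]

theorem nonsingular_iff (q : QF K) : q.Nonsingular ↔ q.toForm.polarBilin.SeparatingLeft := by
  refine forall_congr' fun x => imp_congr_left ?_
  simp only [polarBilin_apply_apply, polar_toForm]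
  exact ⟨fun h y => h ▸ dotProduct_zero y, fun h => dotProduct_eq_zero _ fun y =>
    dotProduct_comm _ y ▸ h y⟩

theorem isometric_iff {q q' : QF K} : Isometric q q' ↔ q.toForm.Equivalent q'.toForm := by
  simp only [Isometric, ← toForm_apply]
  exact ⟨fun ⟨e, he⟩ => ⟨⟨e, he⟩⟩, fun ⟨e⟩ => ⟨e.toLinearEquiv, e.map_app⟩⟩

theorem eval_orthSum (q q' : QF K) (x : Fin (q.dim + q'.dim) → K) :
    (orthSum q q').eval x =
      q.eval (fun i => x (Fin.castAdd q'.dim i)) + q'.eval (fun j => x (Fin.natAdd q.dim j)) := by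
  change ∑ i : Fin (q.dim + q'.dim), ∑ j : Fin (q.dim + q'.dim),
    (orthSum q q').c i j * x i * x j = _
  simp [Fin.sum_univ_add, orthSum, eval]

theorem equivalent_toForm_orthSum (q q' : QF K) :
    (orthSum q q').toForm.Equivalent (q.toForm.prod q'.toForm) := by
  refine ⟨⟨(LinearEquiv.funCongrLeft K K finSumFinEquiv).trans
    (LinearEquiv.sumArrowLequivProdArrow _ _ K K), fun x => ?_⟩⟩
  refine Eq.trans ?_ ((toForm_apply (orthSum q q') x).trans (eval_orthSum q q' x)).symm
  simp only [prod_apply, toForm_apply]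
  rfl

theorem toForm_smul (a : K) (q : QF K) : (smul a q).toForm = a • q.toForm := by
  change (Matrix.toBilin' (a • q.c)).toQuadraticMap = a • (Matrix.toBilin' q.c).toQuadraticMap
  rw [map_smul, LinearMap.BilinMap.toQuadraticMap_smul]

/-- A coefficient matrix for a quadratic form on an arbitrary finite-dimensional space. -/
noncomputable def ofForm {V : Type*} [AddCommGroup V] [Module K V] [FiniteDimensional K V]
    (Q : QuadraticForm K V) : QF K :=
  ⟨Module.finrank K V, LinearMap.BilinForm.toMatrix'
    ((Q.basisRepr (Module.finBasis K V)).toBilin (Pi.basisFun K _))⟩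

theorem toForm_ofForm {V : Type*} [AddCommGroup V] [Module K V] [FiniteDimensional K V]
    (Q : QuadraticForm K V) : (ofForm Q).toForm = Q.basisRepr (Module.finBasis K V) := by
  refine Eq.trans ?_ (toQuadraticMap_toBilin _ (Pi.basisFun K _))
  exact congrArg _ (Matrix.toBilin'_toMatrix' _)

theorem equivalent_toForm_ofForm {V : Type*} [AddCommGroup V] [Module K V]
    [FiniteDimensional K V] (Q : QuadraticForm K V) : (ofForm Q).toForm.Equivalent Q :=
  toForm_ofForm Q ▸ ⟨(isometryEquivBasisRepr Q _).symm⟩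

instance setoid (K : Type*) [Field K] : Setoid (QF K) where
  r := Isometric
  iseqv := by
    refine ⟨fun q => ?_, fun {q q'} h => ?_, fun {q q' q''} h h' => ?_⟩ <;>
      rw [isometric_iff] at *
    exacts [h.symm, h.trans h']

end QF

/-! ### Isometry classes -/

/-- The isometry classes of quadratic forms over `K`, a commutative monoid under orthogonal sum
on which `K` acts by scaling. -/
def QFClass (K : Type*) [Field K] : Type _ := Quotient (QF.setoid K)

namespace QFClass

section Field

variable {K : Type*} [Field K]

/-- The isometry class of a coefficient matrix. -/
def mk (q : QF K) : QFClass K := Quotient.mk _ q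

theorem mk_eq_mk_iff {q q' : QF K} : mk q = mk q' ↔ QF.Isometric q q' :=
  Quotient.eq

section OfForm

variable {V W : Type*} [AddCommGroup V] [Module K V] [FiniteDimensional K V]
  [AddCommGroup W] [Module K W] [FiniteDimensional K W]

/-- The isometry class of a quadratic form on a finite-dimensional space. -/
noncomputable def ofForm (Q : QuadraticForm K V) : QFClass K := mk (QF.ofForm Q)

theorem ofForm_eq_ofForm_iff {Q : QuadraticForm K V} {Q' : QuadraticForm K W} :
    ofForm Q = ofForm Q' ↔ Q.Equivalent Q' := by
  rw [ofForm, ofForm, mk_eq_mk_iff, QF.isometric_iff]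
  have hQ := QF.equivalent_toForm_ofForm Q
  have hQ' := QF.equivalent_toForm_ofForm Q'
  exact ⟨fun h => hQ.symm.trans (h.trans hQ'), fun h => hQ.trans (h.trans hQ'.symm)⟩

theorem mk_eq_ofForm (q : QF K) : mk q = ofForm q.toForm :=
  mk_eq_mk_iff.2 (QF.isometric_iff.2 (QF.equivalent_toForm_ofForm _).symm)

theorem ofForm_congr {Q : QuadraticForm K V} {Q' : QuadraticForm K W} (e : V ≃ₗ[K] W)
    (h : ∀ x, Q' (e x) = Q x) : ofForm Q = ofForm Q' :=
  ofForm_eq_ofForm_iff.2 ⟨⟨e, h⟩⟩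

theorem ofForm_eq_of_injective {Q : QuadraticForm K V} {Q' : QuadraticForm K W}
    (f : V →ₗ[K] W) (hf : Function.Injective f)
    (hVW : Module.finrank K V = Module.finrank K W) (h : ∀ x, Q' (f x) = Q x) :
    ofForm Q = ofForm Q' :=
  ofForm_congr (LinearMap.linearEquivOfInjective f hf hVW) h

@[elab_as_elim]
theorem ind {p : QFClass K → Prop}
    (ofForm : ∀ (n : ℕ) (Q : QuadraticForm K (Fin n → K)), p (ofForm Q)) (z : QFClass K) :
    p z :=
  Quotient.inductionOn z fun q => by
    rw [← mk, mk_eq_ofForm]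
    exact ofForm q.dim q.toForm

end OfForm

instance : Zero (QFClass K) := ⟨mk QF.nil⟩

instance : Add (QFClass K) :=
  ⟨Quotient.map₂ QF.orthSum fun q₁ q₁' h₁ q₂ q₂' h₂ => QF.isometric_iff.2 <|
    (QF.equivalent_toForm_orthSum q₁ q₂).trans <|
      ((QF.isometric_iff.1 h₁).prod (QF.isometric_iff.1 h₂)).trans
        (QF.equivalent_toForm_orthSum q₁' q₂').symm⟩

instance : SMul K (QFClass K) :=
  ⟨fun a => Quotient.map (QF.smul a) fun _ _ h => by
    refine QF.isometric_iff.2 ?_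
    rw [QF.toForm_smul, QF.toForm_smul]
    exact equivalent_smul a (QF.isometric_iff.1 h)⟩

theorem mk_orthSum (q q' : QF K) : mk (QF.orthSum q q') = mk q + mk q' := rfl

theorem mk_smul (a : K) (q : QF K) : mk (QF.smul a q) = a • mk q := rfl

section OfForm

variable {V W : Type*} [AddCommGroup V] [Module K V] [FiniteDimensional K V]
  [AddCommGroup W] [Module K W] [FiniteDimensional K W]

theorem ofForm_prod (Q : QuadraticForm K V) (Q' : QuadraticForm K W) :
    ofForm (Q.prod Q') = ofForm Q + ofForm Q' := by
  refine Eq.trans ?_ (mk_orthSum _ _)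
  rw [mk_eq_ofForm, ofForm_eq_ofForm_iff]
  exact (((QF.equivalent_toForm_ofForm Q).prod (QF.equivalent_toForm_ofForm Q')).symm).trans
    (QF.equivalent_toForm_orthSum _ _).symm

theorem ofForm_smul (a : K) (Q : QuadraticForm K V) : ofForm (a • Q) = a • ofForm Q := by
  refine Eq.trans ?_ (mk_smul _ _)
  rw [mk_eq_ofForm, ofForm_eq_ofForm_iff, QF.toForm_smul]
  exact equivalent_smul a (QF.equivalent_toForm_ofForm Q).symm

theorem ofForm_of_subsingleton [Subsingleton V] (Q : QuadraticForm K V) : ofForm Q = 0 := by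
  refine Eq.trans ?_ (mk_eq_ofForm QF.nil).symm
  have : Subsingleton (Fin (QF.nil (F := K)).dim → K) := inferInstanceAs (Subsingleton (Fin 0 → K))
  exact ofForm_congr 0 fun x => by simp [Subsingleton.elim x 0]

end OfForm

theorem ofForm_fin_zero : ofForm (0 : QuadraticForm K (Fin 0 → K)) = 0 :=
  ofForm_of_subsingleton _

instance : AddCommMonoid (QFClass K) where
  add_assoc x y z := by
    induction x using ind; induction y using ind; induction z using ind
    simp only [← ofForm_prod]
    exact ofForm_congr (LinearEquiv.prodAssoc K _ _ _) fun x => by simp [add_assoc]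
  zero_add x := by
    induction x using ind
    rw [← ofForm_fin_zero, ← ofForm_prod]
    exact ofForm_congr LinearEquiv.uniqueProd fun x => by simp
  add_zero x := by
    induction x using ind
    rw [← ofForm_fin_zero, ← ofForm_prod]
    exact ofForm_congr LinearEquiv.prodUnique fun x => by simp
  add_comm x y := by
    induction x using ind; induction y using ind
    rw [← ofForm_prod, ← ofForm_prod, ofForm_eq_ofForm_iff]
    exact ⟨IsometryEquiv.prodComm _ _⟩
  nsmul := nsmulRec

instance : DistribMulAction K (QFClass K) where
  one_smul x := by
    induction x using ind
    rw [← ofForm_smul, one_smul]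
  mul_smul a b x := by
    induction x using ind
    simp only [← ofForm_smul, mul_smul]
  smul_zero a := by
    rw [← ofForm_fin_zero, ← ofForm_smul, smul_zero]
  smul_add a x y := by
    induction x using ind; induction y using ind
    simp only [← ofForm_smul, ← ofForm_prod]
    exact ofForm_congr (LinearEquiv.refl K _) fun x => by simp [mul_add]

theorem sq_smul {a : K} (ha : a ≠ 0) (z : QFClass K) : a ^ 2 • z = z := by
  induction z using ind
  rw [← ofForm_smul]
  exact ofForm_congr (LinearEquiv.smulOfNeZero K _ a ha) fun x => by
    simp [QuadraticMap.map_smul, pow_two]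

theorem smul_add_smul [CharP K 2] {u v : K} (h : u + v ≠ 0) (z : QFClass K) :
    u • z + v • z = (u + v) • z + (u * v * (u + v)) • z := by
  induction z using ind with | _ n Q
  simp only [← ofForm_smul, ← ofForm_prod]
  let f : (Fin n → K) × (Fin n → K) →ₗ[K] (Fin n → K) × (Fin n → K) :=
    (LinearMap.fst K _ _ + v • LinearMap.snd K _ _).prod
      (LinearMap.fst K _ _ + u • LinearMap.snd K _ _)
  symm
  refine ofForm_eq_of_injective f ?_ rfl fun x => ?_
  · rw [injective_iff_map_eq_zero]
    rintro ⟨x, y⟩ hxy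
    have hx : x + v • y = 0 := congrArg Prod.fst hxy
    have hy : x + u • y = 0 := congrArg Prod.snd hxy
    have h0 : (u + v) • y = 0 := by
      rw [← CharTwo.sub_eq_add, sub_smul, ← add_sub_add_left_eq_sub _ _ x, hx, hy, sub_zero]
    obtain rfl := (smul_eq_zero.1 h0).resolve_left h
    simpa using hx
  · obtain ⟨x, y⟩ := x
    change u * Q (x + v • y) + v * Q (x + u • y) = (u + v) * Q x + u * v * (u + v) * Q y
    simp only [QuadraticMap.map_add Q, QuadraticMap.map_smul, polar_smul_right, smul_eq_mul]
    linear_combination u * v * polar Q x y * CharTwo.two_eq_zero (R := K)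

/-- The dimension of an isometry class. -/
def dim : QFClass K →+ ℕ where
  toFun := Quotient.lift QF.dim fun _ _ ⟨e, _⟩ => by simpa using e.finrank_eq
  map_zero' := rfl
  map_add' x y := Quotient.inductionOn₂ x y fun _ _ => rfl

theorem dim_smul (a : K) (z : QFClass K) : dim (a • z) = dim z :=
  Quotient.inductionOn z fun _ => rfl

theorem eq_zero_of_dim_eq_zero {z : QFClass K} (h : dim z = 0) : z = 0 := by
  induction z using Quotient.inductionOn with | _ q
  change q.dim = 0 at h
  have : Subsingleton (Fin q.dim → K) := h ▸ inferInstanceAs (Subsingleton (Fin 0 → K))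
  exact (mk_eq_ofForm q).trans (ofForm_of_subsingleton _)

/-- The set of values of the forms in an isometry class, including the value `0` at the zero
vector. -/
def values : QFClass K → Set K :=
  Quotient.lift (fun q => Set.range q.eval) fun _ q' ⟨e, he⟩ => by
    rw [← e.surjective.range_comp q'.eval]
    exact congrArg Set.range (funext fun x => (he x).symm)

/-- The classes of forms whose polar form has trivial radical. -/
def Nonsingular : QFClass K → Prop :=
  Quotient.lift QF.Nonsingular fun _ _ h => propext <| by
    rw [QF.nonsingular_iff, QF.nonsingular_iff]
    exact ⟨separatingLeft_polarBilin_of_equivalent (QF.isometric_iff.1 h).symm,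
      separatingLeft_polarBilin_of_equivalent (QF.isometric_iff.1 h)⟩

/-- The classes of forms which have a Lagrangian with values in `S`. -/
def HasLagrangian (S : AddSubgroup K) : QFClass K → Prop :=
  Quotient.lift (fun q => HasLagrangianIn S q.toForm) fun _ _ h => propext
    ⟨.of_equivalent (QF.isometric_iff.1 h), .of_equivalent (QF.isometric_iff.1 h).symm⟩

theorem nonsingular_mk_iff {q : QF K} : (mk q).Nonsingular ↔ q.Nonsingular := Iff.rfl

section OfForm

variable {V W : Type*} [AddCommGroup V] [Module K V] [FiniteDimensional K V]
  {Q : QuadraticForm K V}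

theorem values_ofForm : (ofForm Q).values = Set.range Q := by
  obtain ⟨e⟩ := QF.equivalent_toForm_ofForm Q
  rw [← e.toLinearEquiv.surjective.range_comp Q]
  refine congrArg Set.range (funext fun x => ?_)
  rw [← QF.toForm_apply]
  exact (e.map_app x).symm

theorem nonsingular_ofForm_iff : (ofForm Q).Nonsingular ↔ Q.polarBilin.SeparatingLeft := by
  rw [ofForm, nonsingular_mk_iff, QF.nonsingular_iff]
  exact ⟨separatingLeft_polarBilin_of_equivalent (QF.equivalent_toForm_ofForm Q).symm,
    separatingLeft_polarBilin_of_equivalent (QF.equivalent_toForm_ofForm Q)⟩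

theorem hasLagrangian_ofForm_iff {S : AddSubgroup K} :
    (ofForm Q).HasLagrangian S ↔ HasLagrangianIn S Q :=
  ⟨.of_equivalent (QF.equivalent_toForm_ofForm Q),
    .of_equivalent (QF.equivalent_toForm_ofForm Q).symm⟩

end OfForm

theorem values_zero : (0 : QFClass K).values = 0 := by
  rw [← ofForm_fin_zero, values_ofForm]
  exact Set.range_const

theorem values_add (z w : QFClass K) : (z + w).values = z.values + w.values := by
  induction z using ind; induction w using ind
  rw [← ofForm_prod, values_ofForm, values_ofForm, values_ofForm]
  ext u
  simp [Set.mem_add]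

theorem values_smul (a : K) (z : QFClass K) : (a • z).values = a • z.values := by
  induction z using ind
  rw [← ofForm_smul, values_ofForm, values_ofForm]
  ext u
  simp [Set.mem_smul_set]

theorem nonsingular_add_iff {z w : QFClass K} :
    (z + w).Nonsingular ↔ z.Nonsingular ∧ w.Nonsingular := by
  induction z using ind; induction w using ind
  simp only [← ofForm_prod, nonsingular_ofForm_iff, separatingLeft_polarBilin_prod_iff]

theorem Nonsingular.zero : (0 : QFClass K).Nonsingular := by
  rw [← ofForm_fin_zero, nonsingular_ofForm_iff]
  exact fun x _ => Subsingleton.elim x 0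

theorem Nonsingular.smul {z : QFClass K} (hz : z.Nonsingular) {a : K} (ha : a ≠ 0) :
    (a • z).Nonsingular := by
  induction z using ind
  rw [nonsingular_ofForm_iff] at hz
  rw [← ofForm_smul, nonsingular_ofForm_iff]
  refine fun x hx => hz x fun y => ?_
  simpa [polar_smul, ha] using hx y

namespace HasLagrangian

variable {S : AddSubgroup K} {z w : QFClass K}

theorem zero : (0 : QFClass K).HasLagrangian S := by
  rw [← ofForm_fin_zero, hasLagrangian_ofForm_iff]
  exact ⟨⊥, Subsingleton.elim _ _, fun x _ => S.zero_mem⟩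

theorem add (hz : z.HasLagrangian S) (hw : w.HasLagrangian S) : (z + w).HasLagrangian S := by
  induction z using ind; induction w using ind
  rw [← ofForm_prod]
  rw [hasLagrangian_ofForm_iff] at *
  exact hz.prod hw

theorem of_add (h : (z + w).HasLagrangian S) (hz : z.HasLagrangian S) : w.HasLagrangian S := by
  induction z using ind; induction w using ind
  rw [← ofForm_prod] at h
  rw [hasLagrangian_ofForm_iff] at *
  exact h.of_prod hz

theorem smul {a : K} (ha : a ≠ 0) (hS : ∀ s ∈ S, a * s ∈ S) (hz : z.HasLagrangian S) :
    (a • z).HasLagrangian S := by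
  induction z using ind
  rw [← ofForm_smul]
  rw [hasLagrangian_ofForm_iff] at *
  exact hz.smul ha hS

theorem mono {T : AddSubgroup K} (hST : S ≤ T) (hz : z.HasLagrangian S) : z.HasLagrangian T := by
  induction z using ind
  rw [hasLagrangian_ofForm_iff] at *
  exact hz.imp fun L hL => ⟨hL.1, fun x hx => hST (hL.2 x hx)⟩

theorem bot_or_exists_mem_values (hz : z.HasLagrangian S) :
    z.HasLagrangian ⊥ ∨ ∃ e ∈ S, e ≠ 0 ∧ e ∈ z.values := by
  induction z using ind with | _ n Q
  obtain ⟨L, hL, hLS⟩ := hasLagrangian_ofForm_iff.1 hz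
  by_cases h : ∀ v ∈ L, Q v = 0
  · exact .inl (hasLagrangian_ofForm_iff.2 ⟨L, hL, fun v hv => AddSubgroup.mem_bot.2 (h v hv)⟩)
  · push Not at h
    obtain ⟨v, hv, hv0⟩ := h
    exact .inr ⟨Q v, hLS v hv, hv0, by rw [values_ofForm]; exact Set.mem_range_self v⟩

end HasLagrangian

/-! ### Binary forms -/

/-- The form `(x, y) ↦ ax² + xy + by²`. -/
def binaryForm (a b : K) : QuadraticForm K (K × K) :=
  a • QuadraticMap.sq.comp (LinearMap.fst K K K) +
    linMulLin (LinearMap.fst K K K) (LinearMap.snd K K K) +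
    b • QuadraticMap.sq.comp (LinearMap.snd K K K)

/-- The isometry class of `[a, b]`. -/
def binary (a b : K) : QFClass K := mk (QF.bin a b)

theorem binaryForm_apply (a b : K) (p : K × K) :
    binaryForm a b p = a * p.1 ^ 2 + p.1 * p.2 + b * p.2 ^ 2 := by
  simp [binaryForm, pow_two]

theorem binary_eq_ofForm (a b : K) : binary a b = ofForm (binaryForm a b) := by
  rw [binary, mk_eq_ofForm]
  refine ofForm_congr (LinearEquiv.finTwoArrow K K) fun (x : Fin 2 → K) => ?_
  refine Eq.trans ?_ (QF.toForm_apply (QF.bin a b) x).symm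
  simp only [binaryForm_apply, QF.eval]
  change a * x 0 ^ 2 + x 0 * x 1 + b * x 1 ^ 2 =
    ∑ i : Fin 2, ∑ j : Fin 2, !![a, 1; 0, b] i j * x i * x j
  simp only [Matrix.of_apply, Matrix.cons_val', Matrix.cons_val_fin_one, Fin.sum_univ_two,
    Matrix.cons_val_zero, Matrix.cons_val_one]
  ring

theorem dim_binary (a b : K) : dim (binary a b) = 2 := rfl

theorem dim_lt_dim_binary_add (c x : K) (z : QFClass K) : dim z < dim (binary c x + z) := by
  rw [map_add, dim_binary]
  omega

theorem binary_comm (a b : K) : binary a b = binary b a := by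
  rw [binary_eq_ofForm, binary_eq_ofForm]
  refine ofForm_congr (LinearEquiv.prodComm K K K) fun p => ?_
  simp only [binaryForm_apply, LinearEquiv.prodComm_apply, Prod.fst_swap, Prod.snd_swap]
  ring

theorem smul_binary {k : K} (hk : k ≠ 0) (a b : K) :
    k • binary a b = binary (k * a) (b / k) := by
  rw [binary_eq_ofForm, binary_eq_ofForm, ← ofForm_smul]
  refine ofForm_congr
    ((LinearEquiv.refl K K).prodCongr (LinearEquiv.smulOfNeZero K K k hk)) fun p => ?_
  simp only [LinearEquiv.prodCongr_apply, LinearEquiv.refl_apply,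
    LinearEquiv.smulOfNeZero_apply, binaryForm_apply, smul_apply, smul_eq_mul]
  field_simp

section CharTwo

variable [CharP K 2]

theorem polar_binaryForm (a b : K) (p p' : K × K) :
    polar (binaryForm a b) p p' = p.1 * p'.2 + p.2 * p'.1 := by
  simp only [polar, binaryForm_apply, Prod.fst_add, Prod.snd_add]
  linear_combination (a * p.1 * p'.1 + b * p.2 * p'.2) * CharTwo.two_eq_zero (R := K)

theorem binary_eq_binary_add (a b t : K) : binary a b = binary a (b + t + a * t ^ 2) := by
  rw [binary_eq_ofForm, binary_eq_ofForm]
  let f : K × K →ₗ[K] K × K :=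
    (LinearMap.fst K K K + t • LinearMap.snd K K K).prod (LinearMap.snd K K K)
  refine (ofForm_eq_of_injective f ?_ rfl fun p => ?_).symm
  · rw [injective_iff_map_eq_zero]
    rintro ⟨x, y⟩ hxy
    have hy : y = 0 := congrArg Prod.snd hxy
    have hx : x + t * y = 0 := congrArg Prod.fst hxy
    rw [hy, mul_zero, add_zero] at hx
    rw [hx, hy, Prod.mk_zero_zero]
  · change binaryForm a b (p.1 + t * p.2, p.2) = _
    simp only [binaryForm_apply]
    linear_combination (a * p.1 * t * p.2) * CharTwo.two_eq_zero (R := K)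

theorem binary_add_binary (a b c d : K) :
    binary a b + binary c d = binary (a + c) b + binary c (b + d) := by
  simp only [binary_eq_ofForm, ← ofForm_prod]
  let x₁ := LinearMap.fst K K K ∘ₗ LinearMap.fst K (K × K) (K × K)
  let y₁ := LinearMap.snd K K K ∘ₗ LinearMap.fst K (K × K) (K × K)
  let x₂ := LinearMap.fst K K K ∘ₗ LinearMap.snd K (K × K) (K × K)
  let y₂ := LinearMap.snd K K K ∘ₗ LinearMap.snd K (K × K) (K × K)
  let f : (K × K) × (K × K) →ₗ[K] (K × K) × (K × K) :=
    (x₁.prod (y₁ + y₂)).prod ((x₁ + x₂).prod y₂)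
  refine (ofForm_eq_of_injective f ?_ rfl fun p => ?_).symm
  · rw [injective_iff_map_eq_zero]
    rintro ⟨⟨x, y⟩, x', y'⟩ h
    have h₁ : (x, y + y') = 0 := congrArg Prod.fst h
    have h₂ : (x + x', y') = 0 := congrArg Prod.snd h
    simp_all [Prod.mk_eq_zero]
  · change (binaryForm a b).prod (binaryForm c d)
      ((p.1.1, p.1.2 + p.2.2), (p.1.1 + p.2.1, p.2.2)) = _
    simp only [binaryForm_apply, prod_apply]
    linear_combination (p.1.1 * p.2.2 + b * p.1.2 * p.2.2 + c * p.1.1 * p.2.1) *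
      CharTwo.two_eq_zero (R := K)

theorem exists_binary_eq_smul_binary_one (a b : K) :
    ∃ k c : K, k ≠ 0 ∧ binary a b = k • binary 1 c := by
  by_cases ha : a = 0
  · refine ⟨1, 0, one_ne_zero, ?_⟩
    rw [one_smul, ha, binary_eq_binary_add 0 b (b + 1), binary_comm, ← add_assoc,
      CharTwo.add_self_eq_zero, zero_add, zero_mul, add_zero]
  · exact ⟨a, a * b, ha, by rw [smul_binary ha, mul_one, mul_div_cancel_left₀ b ha]⟩

theorem nonsingular_binary (a b : K) : (binary a b).Nonsingular := by
  rw [binary_eq_ofForm, nonsingular_ofForm_iff]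
  refine fun p hp => Prod.ext ?_ ?_
  · have h := (polar_binaryForm a b p (0, 1)).symm.trans (hp (0, 1))
    simpa using h
  · have h := (polar_binaryForm a b p (1, 0)).symm.trans (hp (1, 0))
    simpa using h

theorem hasLagrangian_binary {S : AddSubgroup K} (hS : ∀ s ∈ S, ∀ t, s * t ^ 2 ∈ S) {a : K}
    (ha : a ∈ S) (b : K) : (binary a b).HasLagrangian S := by
  rw [binary_eq_ofForm, hasLagrangian_ofForm_iff]
  refine ⟨LinearMap.ker (LinearMap.snd K K K), ?_, fun p hp => ?_⟩
  · ext p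
    simp only [Submodule.mem_orthogonalBilin_iff, LinearMap.mem_ker, LinearMap.snd_apply,
      polarBilin_apply_apply, polar_binaryForm]
    exact ⟨fun h => by simpa using h (1, 0) rfl, fun hp p' hp' => by simp [hp, hp']⟩
  · rw [binaryForm_apply, show p.2 = 0 from hp]
    simpa using hS a ha p.1

section Splitting

variable {V : Type*} [AddCommGroup V] [Module K V] [FiniteDimensional K V] {Q : QuadraticForm K V}

theorem exists_ofForm_eq_binary_add {v w : V} (hvw : polar Q v w = 1) :
    ∃ z, ofForm Q = binary (Q v) (Q w) + z := by
  have polar_self_eq (u : V) : polar Q u u = 0 := by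
    rw [polar_self, two_nsmul, CharTwo.add_self_eq_zero]
  have hwv : polar Q w v = 1 := by rw [polar_comm, hvw]
  let π : V →ₗ[K] K × K := (Q.polarBilin w).prod (Q.polarBilin v)
  let s : K × K →ₗ[K] V :=
    (LinearMap.toSpanSingleton K V v).coprod (LinearMap.toSpanSingleton K V w)
  let g : (K × K) × LinearMap.ker π →ₗ[K] V := s.coprod (LinearMap.ker π).subtype
  have hπs (p : K × K) : π (s p) = p :=
    Prod.ext (by simp [π, s, polar_self_eq, hwv]) (by simp [π, s, polar_self_eq, hvw])
  have hπg (p) : π (g p) = p.1 := by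
    rw [LinearMap.coprod_apply, map_add, hπs, Submodule.subtype_apply,
      LinearMap.mem_ker.1 p.2.2, add_zero]
  refine ⟨ofForm (Q.comp (LinearMap.ker π).subtype), ?_⟩
  rw [binary_eq_ofForm, ← ofForm_prod]
  refine (ofForm_eq_of_injective g ?_ ?_ fun p => ?_).symm
  · rw [injective_iff_map_eq_zero]
    intro p hp
    have hp₁ : p.1 = 0 := by rw [← hπg, hp, map_zero]
    refine Prod.ext hp₁ (Subtype.ext ?_)
    simpa [g, hp₁] using hp
  · have hπ : LinearMap.range π = ⊤ := LinearMap.range_eq_top.2 fun p => ⟨s p, hπs p⟩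
    rw [Module.finrank_prod, ← LinearMap.finrank_range_add_finrank_ker π, hπ, finrank_top]
  · have hpw : polar Q w p.2 = 0 := congrArg Prod.fst (LinearMap.mem_ker.1 p.2.2)
    have hpv : polar Q v p.2 = 0 := congrArg Prod.snd (LinearMap.mem_ker.1 p.2.2)
    change Q (p.1.1 • v + p.1.2 • w + (p.2 : V)) = binaryForm (Q v) (Q w) p.1 + Q p.2
    simp only [binaryForm_apply, QuadraticMap.map_add Q, QuadraticMap.map_smul, polar_add_left,
      polar_smul_left, polar_smul_right, hvw, hpv, hpw, smul_eq_mul]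
    ring

theorem exists_ofForm_eq_binary_add_of_ne_zero (hQ : Q.polarBilin.SeparatingLeft) {v : V}
    (hv : v ≠ 0) : ∃ x z, ofForm Q = binary (Q v) x + z :=
  have ⟨w, hw⟩ := exists_polar_eq_one hQ hv
  ⟨Q w, exists_ofForm_eq_binary_add hw⟩

end Splitting

theorem Nonsingular.exists_eq_binary_add {z : QFClass K} (hz : z.Nonsingular) (h0 : z ≠ 0) :
    ∃ c x z', z'.Nonsingular ∧ z = binary c x + z' := by
  induction z using ind with | _ n Q
  have : Nontrivial (Fin n → K) := by
    by_contra h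
    rw [not_nontrivial_iff_subsingleton] at h
    exact h0 (ofForm_of_subsingleton Q)
  obtain ⟨v, hv⟩ := exists_ne (0 : Fin n → K)
  obtain ⟨x, z', h⟩ :=
    exists_ofForm_eq_binary_add_of_ne_zero (nonsingular_ofForm_iff.1 hz) hv
  exact ⟨Q v, x, z', (nonsingular_add_iff.1 (h ▸ hz)).2, h⟩

theorem HasLagrangian.exists_eq_binary_add {S : AddSubgroup K}
    (hS : ∀ s ∈ S, ∀ t, s * t ^ 2 ∈ S) {z : QFClass K} (hz : z.Nonsingular)
    (hL : z.HasLagrangian S) (h0 : z ≠ 0) :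
    ∃ c x z', c ∈ S ∧ z'.Nonsingular ∧ z'.HasLagrangian S ∧ z = binary c x + z' := by
  induction z using ind with | _ n Q
  obtain ⟨L, hLL, hLS⟩ := hasLagrangian_ofForm_iff.1 hL
  obtain ⟨v, hvL, hv⟩ : ∃ v ∈ L, v ≠ 0 := by
    by_contra! h
    have h_top (x : Fin n → K) : x ∈ L := (mem_iff_of_orthogonalBilin_eq hLL x).2 fun y hy => by
      rw [h y hy, polar_zero_left]
    have : Subsingleton (Fin n → K) := subsingleton_of_forall_eq 0 fun x => h x (h_top x)
    exact h0 (ofForm_of_subsingleton Q)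
  obtain ⟨x, z', h⟩ :=
    exists_ofForm_eq_binary_add_of_ne_zero (nonsingular_ofForm_iff.1 hz) hv
  rw [h] at hz hL
  exact ⟨Q v, x, z', hLS v hvL, (nonsingular_add_iff.1 hz).2,
    hL.of_add (hasLagrangian_binary hS (hLS v hvL) x), h⟩

@[elab_as_elim]
theorem Nonsingular.induction {P : QFClass K → Prop} (zero : P 0)
    (binary_add : ∀ c x z, z.Nonsingular → P z → P (binary c x + z)) {z : QFClass K}
    (hz : z.Nonsingular) : P z := by
  induction h : dim z using Nat.strong_induction_on generalizing z with | _ n ih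
  by_cases h0 : z = 0
  · exact h0 ▸ zero
  obtain ⟨c, x, z', hz', rfl⟩ := hz.exists_eq_binary_add h0
  exact binary_add c x z' hz' (ih _ (h ▸ dim_lt_dim_binary_add c x z') hz' rfl)

@[elab_as_elim]
theorem HasLagrangian.induction {S : AddSubgroup K} (hS : ∀ s ∈ S, ∀ t, s * t ^ 2 ∈ S)
    {P : QFClass K → Prop} (zero : P 0)
    (binary_add : ∀ c ∈ S, ∀ x z, P z → P (binary c x + z)) {z : QFClass K}
    (hz : z.Nonsingular) (hL : z.HasLagrangian S) : P z := by
  induction h : dim z using Nat.strong_induction_on generalizing z with | _ n ih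
  by_cases h0 : z = 0
  · exact h0 ▸ zero
  obtain ⟨c, x, z', hc, hz', hL', rfl⟩ := HasLagrangian.exists_eq_binary_add hS hz hL h0
  exact binary_add c hc x z' (ih _ (h ▸ dim_lt_dim_binary_add c x z') hz' hL' rfl)

theorem HasLagrangian.exists_eq_nsmul {z : QFClass K} (hz : z.Nonsingular)
    (hL : z.HasLagrangian ⊥) : ∃ k : ℕ, z = k • binary 0 0 := by
  refine HasLagrangian.induction (by simp) ?_ ?_ hz hL
  · exact ⟨0, (zero_nsmul _).symm⟩
  · rintro c hc x _ ⟨k, rfl⟩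
    have hx : binary 0 x = binary 0 0 := by
      rw [binary_eq_binary_add 0 x x, CharTwo.add_self_eq_zero, zero_mul, add_zero]
    exact ⟨k + 1, by rw [AddSubgroup.mem_bot.1 hc, hx, succ_nsmul']⟩

theorem eq_of_hasLagrangian_bot {z w : QFClass K} (hz : z.Nonsingular) (hw : w.Nonsingular)
    (hz' : z.HasLagrangian ⊥) (hw' : w.HasLagrangian ⊥) (h : dim z = dim w) : z = w := by
  obtain ⟨k, rfl⟩ := hz'.exists_eq_nsmul hz
  obtain ⟨m, rfl⟩ := hw'.exists_eq_nsmul hw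
  rw [map_nsmul, map_nsmul, dim_binary] at h
  rw [Nat.eq_of_mul_eq_mul_right two_pos h]

theorem Nonsingular.exists_hasLagrangian_bot {z : QFClass K} (hz : z.Nonsingular) :
    ∃ z' : QFClass K, z'.Nonsingular ∧ z'.HasLagrangian ⊥ ∧ dim z' = dim z := by
  refine Nonsingular.induction ?_ ?_ hz
  · exact ⟨0, .zero, .zero, rfl⟩
  · rintro c x z - ⟨z', hz', hL, hdim⟩
    exact ⟨binary 0 0 + z', nonsingular_add_iff.2 ⟨nonsingular_binary 0 0, hz'⟩,
      .add (hasLagrangian_binary (by simp) (zero_mem _) 0) hL,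
      by rw [map_add, map_add, hdim, dim_binary, dim_binary]⟩

/-! ### Round forms -/

/-- The classes `z` which are isometric to `u • z` for each nonzero value `u` of `z`. -/
def IsRound (z : QFClass K) : Prop := ∀ u ∈ z.values, u ≠ 0 → u • z = z

theorem isRound_binary_one (b : K) : (binary 1 b).IsRound := by
  intro u hu hu0
  rw [binary_eq_ofForm, values_ofForm] at hu
  obtain ⟨⟨p, q⟩, hpq⟩ := hu
  simp only [binaryForm_apply, one_mul] at hpq
  have h2 : (2 : K) = 0 := CharTwo.two_eq_zero
  let f : K × K →ₗ[K] K × K :=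
    (p • LinearMap.fst K K K + (b * q) • LinearMap.snd K K K).prod
      (q • LinearMap.fst K K K + (p + q) • LinearMap.snd K K K)
  rw [binary_eq_ofForm, ← ofForm_smul]
  refine ofForm_eq_of_injective f ?_ rfl fun x => ?_
  · rw [injective_iff_map_eq_zero]
    rintro ⟨x, y⟩ hxy
    have h₁ : p * x + b * q * y = 0 := congrArg Prod.fst hxy
    have h₂ : q * x + (p + q) * y = 0 := congrArg Prod.snd hxy
    have hx : u * x = 0 := by
      linear_combination (p + q) * h₁ + b * q * h₂ - x * hpq - b * q * (p + q) * y * h2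
    have hy : u * y = 0 := by
      linear_combination q * h₁ + p * h₂ - y * hpq - p * q * x * h2
    rw [(mul_eq_zero_iff_left hu0).1 hx, (mul_eq_zero_iff_left hu0).1 hy, Prod.mk_zero_zero]
  · change binaryForm 1 b (p * x.1 + b * q * x.2, q * x.1 + (p + q) * x.2) = u * binaryForm 1 b x
    simp only [binaryForm_apply, ← hpq]
    linear_combination (b * q * x.2 * (p * x.1 * 2 + q * x.1 + p * x.2 + q * x.2)) * h2

theorem IsRound.add_smul {z : QFClass K} (hz : z.IsRound) (a : K) : (z + a • z).IsRound := by
  intro u hu hu0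
  rw [values_add, values_smul] at hu
  obtain ⟨v, hv, _, ⟨w, hw, rfl⟩, rfl⟩ := hu
  simp only [smul_eq_mul] at hu0 ⊢
  by_cases haw : a * w = 0
  · rw [haw, add_zero] at hu0 ⊢
    rw [smul_add, smul_comm, hz v hv hu0]
  obtain ⟨ha, hw0⟩ := mul_ne_zero_iff.1 haw
  by_cases hv0 : v = 0
  · rw [hv0, zero_add, mul_smul, smul_add, smul_comm w a, hz w hw hw0, smul_add, smul_smul,
      ← pow_two, sq_smul ha, add_comm]
  calc (v + a * w) • (z + a • z)
    _ = (v + a * w) • z + (v * (a * w) * (v + a * w)) • z := by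
      rw [show v * (a * w) * (v + a * w) = (v + a * w) * a * v * w by ring, mul_smul _ w,
        hz w hw hw0, mul_smul _ v, hz v hv hv0, smul_add, smul_smul]
    _ = v • z + (a * w) • z := (smul_add_smul hu0 z).symm
    _ = z + a • z := by rw [mul_smul, hz w hw hw0, hz v hv hv0]

end CharTwo

/-! ### Pfister multiples -/

/-- Tensor multiplication by the bilinear Pfister form `⟨⟨a₁, …, aₙ⟩⟩_b`, where
`l = [a₁, …, aₙ]`. -/
def pfisterMul : (l : List K) → QFClass K →+ QFClass K
  | [] => AddMonoidHom.id _
  | a :: l => pfisterMul l + (DistribSMul.toAddMonoidHom _ a).comp (pfisterMul l)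

theorem pfisterMul_cons (a : K) (l : List K) (z : QFClass K) :
    pfisterMul (a :: l) z = pfisterMul l z + a • pfisterMul l z := rfl

theorem mk_pfTensor (l : List K) (q : QF K) :
    mk (QF.pfTensor l q) = pfisterMul l (mk q) := by
  induction l with
  | nil => rfl
  | cons a l ih => rw [pfisterMul_cons, ← ih]; rfl

theorem pfisterMul_smul (l : List K) (a : K) (z : QFClass K) :
    pfisterMul l (a • z) = a • pfisterMul l z := by
  induction l with
  | nil => rfl
  | cons b l ih => rw [pfisterMul_cons, pfisterMul_cons, ih, smul_add, smul_comm]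

theorem dim_pfisterMul (l : List K) (z : QFClass K) :
    dim (pfisterMul l z) = 2 ^ l.length * dim z := by
  induction l with
  | nil => exact (one_mul _).symm
  | cons a l ih =>
    rw [pfisterMul_cons, map_add, dim_smul, ih, List.length_cons, pow_succ', mul_assoc, two_mul]

theorem dim_eq_of_pfisterMul_eq {l : List K} {z z' : QFClass K}
    (h : pfisterMul l z = pfisterMul l z') : dim z = dim z' := by
  have h' := congrArg dim h
  rw [dim_pfisterMul, dim_pfisterMul] at h'
  exact Nat.eq_of_mul_eq_mul_left (by positivity) h'

protected theorem Nonsingular.pfisterMul {l : List K} (hl : ∀ c ∈ l, c ≠ 0) {z : QFClass K}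
    (hz : z.Nonsingular) : (pfisterMul l z).Nonsingular := by
  induction l with
  | nil => exact hz
  | cons a l ih =>
    rw [List.forall_mem_cons] at hl
    exact nonsingular_add_iff.2 ⟨ih hl.2, (ih hl.2).smul hl.1⟩

protected theorem HasLagrangian.pfisterMul {S : AddSubgroup K} {l : List K} (hl : ∀ c ∈ l, c ≠ 0)
    (hlS : ∀ c ∈ l, ∀ s ∈ S, c * s ∈ S) {z : QFClass K} (hz : z.HasLagrangian S) :
    (pfisterMul l z).HasLagrangian S := by
  induction l with
  | nil => exact hz
  | cons a l ih =>
    rw [List.forall_mem_cons] at hl hlS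
    exact (ih hl.2 hlS.2).add ((ih hl.2 hlS.2).smul hl.1 hlS.1)

section CharTwo

variable [CharP K 2] {l : List K}

protected theorem IsRound.pfisterMul {z : QFClass K} (hz : z.IsRound) :
    (pfisterMul l z).IsRound := by
  induction l with
  | nil => exact hz
  | cons a l ih => exact ih.add_smul a

theorem exists_pfisterMul_binary_eq {c x u : K} (hu : u ∈ (pfisterMul l (binary c x)).values)
    (hu0 : u ≠ 0) : ∃ y, pfisterMul l (binary c x) = pfisterMul l (binary u y) := by
  obtain ⟨k, b, hk, h⟩ := exists_binary_eq_smul_binary_one c x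
  rw [h, pfisterMul_smul] at hu ⊢
  rw [values_smul] at hu
  obtain ⟨t, ht, rfl⟩ := hu
  change k * t ≠ 0 at hu0
  have ht0 : t ≠ 0 := right_ne_zero_of_mul hu0
  refine ⟨b / (k * t), ?_⟩
  rw [← (isRound_binary_one b).pfisterMul t ht ht0, smul_smul, ← pfisterMul_smul,
    smul_binary hu0, mul_one]
  rfl

theorem Nonsingular.exists_pfisterMul_eq {z : QFClass K} (hz : z.Nonsingular) :
    ∀ e ∈ (pfisterMul l z).values, e ≠ 0 → ∃ x z', z'.Nonsingular ∧
      pfisterMul l z = pfisterMul l (binary e x + z') := by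
  refine Nonsingular.induction (fun e he he0 => ?_) (fun c x z hz ih e he he0 => ?_) hz
  · rw [map_zero, values_zero] at he
    exact absurd he he0
  · rw [map_add, values_add] at he
    obtain ⟨u, hu, w, hw, rfl⟩ := he
    beta_reduce at he0 ⊢
    by_cases hw0 : w = 0
    · rw [hw0, add_zero] at he0 ⊢
      obtain ⟨y, hy⟩ := exists_pfisterMul_binary_eq hu he0
      exact ⟨y, z, hz, by rw [map_add, map_add, hy]⟩
    obtain ⟨y', z', hz', hzz'⟩ := ih w hw hw0
    by_cases hu0 : u = 0
    · refine ⟨y', binary c x + z', nonsingular_add_iff.2 ⟨nonsingular_binary c x, hz'⟩, ?_⟩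
      rw [map_add, hzz', ← map_add, hu0, zero_add, add_left_comm]
    · obtain ⟨y, hy⟩ := exists_pfisterMul_binary_eq hu hu0
      refine ⟨y, binary w (y + y') + z', nonsingular_add_iff.2 ⟨nonsingular_binary _ _, hz'⟩, ?_⟩
      rw [map_add, hzz', hy, ← map_add, ← add_assoc, ← add_assoc, binary_add_binary]

variable {S : AddSubgroup K}

theorem Nonsingular.exists_hasLagrangian_pfisterMul_eq (hS : ∀ s ∈ S, ∀ t, s * t ^ 2 ∈ S)
    (hl : ∀ c ∈ l, c ≠ 0) (hlS : ∀ c ∈ l, ∀ s ∈ S, c * s ∈ S) {z : QFClass K}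
    (hz : z.Nonsingular) (hL : (pfisterMul l z).HasLagrangian S) :
    ∃ z', z'.Nonsingular ∧ z'.HasLagrangian S ∧ pfisterMul l z = pfisterMul l z' := by
  induction h : dim z using Nat.strong_induction_on generalizing z with | _ n ih
  rcases hL.bot_or_exists_mem_values with hL₀ | ⟨e, heS, he0, he⟩
  · obtain ⟨z', hz', hL', hdim⟩ := hz.exists_hasLagrangian_bot
    refine ⟨z', hz', hL'.mono bot_le, ?_⟩
    refine eq_of_hasLagrangian_bot (hz.pfisterMul hl) (hz'.pfisterMul hl) hL₀
      (hL'.pfisterMul hl (by simp)) ?_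
    rw [dim_pfisterMul, dim_pfisterMul, hdim]
  · obtain ⟨x, z', hz', hzz'⟩ := hz.exists_pfisterMul_eq e he he0
    have hbin := hasLagrangian_binary hS heS x
    rw [hzz', map_add] at hL
    have hdim : dim z' < n := by
      rw [← h, dim_eq_of_pfisterMul_eq hzz']
      exact dim_lt_dim_binary_add e x z'
    obtain ⟨w, hw, hwL, hz'w⟩ := ih _ hdim hz' (hL.of_add (hbin.pfisterMul hl hlS)) rfl
    refine ⟨binary e x + w, nonsingular_add_iff.2 ⟨nonsingular_binary e x, hw⟩,
      hbin.add hwL, ?_⟩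
    rw [hzz', map_add, map_add, hz'w]

end CharTwo

end Field

end QFClass

/-! ### Extension of scalars -/

theorem quadraticForm_ext_of_comp {R S ι : Type*} [CommRing R] [CommRing S] [Finite ι]
    (f : R →+* S) {Q Q' : QuadraticForm S (ι → S)}
    (h : ∀ x : ι → R, Q (f ∘ x) = Q' (f ∘ x)) : Q = Q' := by
  classical
  cases nonempty_fintype ι
  have : LinearOrder ι := LinearOrder.lift' (Fintype.equivFin ι) (Equiv.injective _)
  let b := Pi.basisFun S ι
  have hb (i : ι) : b i = f ∘ Pi.single i 1 := by
    ext j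
    simp [b, Pi.single_apply, apply_ite f]
  have h_basis (i : ι) : Q (b i) = Q' (b i) := by rw [hb, h]
  have h_polar (i j : ι) : polar Q (b i) (b j) = polar Q' (b i) (b j) := by
    have hij : b i + b j = f ∘ (Pi.single i 1 + Pi.single j 1) := by
      ext
      simp [hb]
    simp only [polar, h_basis, hij, h]
  rw [← toQuadraticMap_toBilin Q b, ← toQuadraticMap_toBilin Q' b]
  refine congrArg _ (b.ext fun i => b.ext fun j => ?_)
  rw [toBilin_apply, toBilin_apply, h_basis, h_polar]

section BaseChange

variable {F K : Type*} [Field F] [Field K] (f : F →+* K)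

namespace QF

theorem toForm_map_comp (q : QF F) (x : Fin q.dim → F) :
    (q.map f).toForm (f ∘ x) = f (q.eval x) := by
  refine (toForm_apply (q.map f) (f ∘ x)).trans ?_
  simp only [eval, map_sum, map_mul]
  rfl

variable {f} in
theorem Isometric.map {q q' : QF F} (h : Isometric q q') : Isometric (q.map f) (q'.map f) := by
  obtain ⟨e, he⟩ := h
  let A := LinearMap.toMatrix' e.toLinearMap
  let B := LinearMap.toMatrix' e.symm.toLinearMap
  have hAB : A.map f * B.map f = 1 := by
    rw [← Matrix.map_mul, ← LinearMap.toMatrix'_comp]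
    simp
  have hBA : B.map f * A.map f = 1 := by
    rw [← Matrix.map_mul, ← LinearMap.toMatrix'_comp]
    simp
  have hA (x : Fin q.dim → F) : Matrix.toLin' (A.map f) (f ∘ x) = f ∘ e x := by
    ext i
    rw [Matrix.toLin'_apply, ← RingHom.map_mulVec, LinearMap.toMatrix'_mulVec]
    rfl
  have hcomp : (q'.map f).toForm.comp (Matrix.toLin' (A.map f)) = (q.map f).toForm :=
    quadraticForm_ext_of_comp f fun x => calc
      (q'.map f).toForm (Matrix.toLin' (A.map f) (f ∘ x))
      _ = (q'.map f).toForm (f ∘ e x) := congrArg _ (hA x)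
      _ = (q.map f).toForm (f ∘ x) := by rw [toForm_map_comp, toForm_map_comp, he]
  exact isometric_iff.2
    ⟨⟨Matrix.toLin'OfInv hBA hAB, fun x => DFunLike.congr_fun hcomp x⟩⟩

variable {f} in
theorem Nonsingular.of_map {q : QF F} (h : (q.map f).Nonsingular) : q.Nonsingular := by
  intro x hx
  have hx' (i : Fin q.dim) : (q.c.map f + q.c.transpose.map f).mulVec (f ∘ x) i = 0 := by
    rw [← Matrix.map_add f (map_add f), ← RingHom.map_mulVec, hx, Pi.zero_apply, map_zero]
  have hfx : f ∘ x = 0 := h (f ∘ x) (funext hx')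
  exact funext fun i => (map_eq_zero f).1 (congrFun hfx i)

theorem map_orthSum (q q' : QF F) : (orthSum q q').map f = orthSum (q.map f) (q'.map f) := by
  have h : (Matrix.fromBlocks q.c 0 0 q'.c).map f =
      Matrix.fromBlocks (q.c.map f) 0 0 (q'.c.map f) := by
    rw [Matrix.fromBlocks_map, Matrix.map_zero f (map_zero f), Matrix.map_zero f (map_zero f)]
  exact congrArg
    (fun c => QF.mk (q.dim + q'.dim) (Matrix.reindex finSumFinEquiv finSumFinEquiv c)) h

theorem map_smul (a : F) (q : QF F) : (smul a q).map f = smul (f a) (q.map f) :=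
  congrArg (QF.mk q.dim) (Matrix.ext fun i j => map_mul f a (q.c i j))

theorem map_bin (a b : F) : (bin a b).map f = bin (f a) (f b) := by
  refine congrArg (QF.mk 2) (Matrix.ext fun i j => ?_)
  fin_cases i <;> fin_cases j <;> simp [bin]

end QF

namespace QFClass

/-- Extension of scalars of isometry classes along `f`. -/
def baseChange : QFClass F →+ QFClass K where
  toFun := Quotient.map (QF.map f) fun _ _ h => h.map
  map_zero' := eq_zero_of_dim_eq_zero rfl
  map_add' x y := Quotient.inductionOn₂ x y fun q q' => congrArg mk (QF.map_orthSum f q q')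

theorem baseChange_mk (q : QF F) : baseChange f (mk q) = mk (q.map f) := rfl

theorem baseChange_smul (a : F) (z : QFClass F) :
    baseChange f (a • z) = f a • baseChange f z :=
  Quotient.inductionOn z fun q => congrArg mk (QF.map_smul f a q)

theorem baseChange_binary (a b : F) : baseChange f (binary a b) = binary (f a) (f b) :=
  congrArg mk (QF.map_bin f a b)

theorem baseChange_pfisterMul (l : List F) (z : QFClass F) :
    baseChange f (pfisterMul l z) = pfisterMul (l.map fun c => f c) (baseChange f z) := by
  induction l with
  | nil => rfl
  | cons a l ih =>
    rw [List.map_cons, pfisterMul_cons, pfisterMul_cons, map_add, baseChange_smul, ih]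

variable {f} in
theorem Nonsingular.of_baseChange {z : QFClass F} (h : (baseChange f z).Nonsingular) :
    z.Nonsingular := by
  induction z using Quotient.inductionOn
  exact QF.Nonsingular.of_map h

section Descent

variable {f}

theorem mul_sq_mem_range (hf : ∀ x : K, ∃ y, f y = x ^ 2) :
    ∀ s ∈ f.range.toAddSubgroup, ∀ t, s * t ^ 2 ∈ f.range.toAddSubgroup := fun _ hs t =>
  f.range.mul_mem hs (hf t)

variable [CharP K 2]

theorem hasLagrangian_baseChange [CharP F 2] (hf : ∀ x : K, ∃ y, f y = x ^ 2) {z : QFClass F}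
    (hz : z.Nonsingular) : (baseChange f z).HasLagrangian f.range.toAddSubgroup := by
  refine Nonsingular.induction ?_ (fun c x z _ ih => ?_) hz
  · rw [map_zero]
    exact .zero
  · rw [map_add, baseChange_binary]
    exact (hasLagrangian_binary (mul_sq_mem_range hf) ⟨c, rfl⟩ _).add ih

theorem exists_baseChange_eq (hf : ∀ x : K, ∃ y, f y = x ^ 2) {w : QFClass K}
    (hw : w.Nonsingular) (hL : w.HasLagrangian f.range.toAddSubgroup) :
    ∃ z, baseChange f z = w := by
  refine HasLagrangian.induction (mul_sq_mem_range hf) ⟨0, map_zero _⟩ ?_ hw hL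
  rintro _ ⟨e, rfl⟩ x _ ⟨z, rfl⟩
  obtain ⟨y, hy⟩ := hf x
  refine ⟨binary e (e * y) + z, ?_⟩
  rw [map_add, baseChange_binary, map_mul, hy, binary_eq_binary_add (f e) x x,
    CharTwo.add_self_eq_zero, zero_add]

end Descent

end QFClass

end BaseChange

open QF in
/-- Let `F` have characteristic 2, `K/F` purely inseparable of
exponent 1 (`K² ⊆ F`), `B = ⟨⟨a₁,…,aₙ⟩⟩_b` a bilinear Pfister form over `F`, and `ρ` a
nonsingular quadratic form over `K` such that `B_K ⊗ ρ` is defined over `F`, i.e.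
`φ_K ≅ B_K ⊗ ρ` for some quadratic form `φ` over `F`.  Then there is a nonsingular
quadratic form `ρ₀` over `F` with `φ_K ≅ B_K ⊗ ρ ≅ (B ⊗ ρ₀)_K`. -/
theorem pfister_multiple_descends
    (F K : Type*) [Field F] [Field K] [Algebra F K] [CharP F 2]
    (hK : ∀ x : K, ∃ y : F, algebraMap F K y = x ^ 2)
    (a : List F) (ha : ∀ c ∈ a, c ≠ 0)
    (ρ : QF K) (hρ : ρ.Nonsingular)
    (φ : QF F)
    (hφ : Isometric (φ.map (algebraMap F K))
      (pfTensor (a.map fun c => algebraMap F K c) ρ)) :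
    ∃ ρ₀ : QF F, ρ₀.Nonsingular ∧
      Isometric (φ.map (algebraMap F K)) ((pfTensor a ρ₀).map (algebraMap F K)) ∧
      Isometric (pfTensor (a.map fun c => algebraMap F K c) ρ)
        ((pfTensor a ρ₀).map (algebraMap F K)) := by
  have : CharP K 2 := charP_of_injective_algebraMap (algebraMap F K).injective 2
  rw [← QFClass.nonsingular_mk_iff] at hρ
  simp only [← QFClass.mk_eq_mk_iff, ← QFClass.baseChange_mk, QFClass.mk_pfTensor] at hφ ⊢
  set f := algebraMap F K
  set l := a.map fun c => f c
  have hl : ∀ c ∈ l, c ≠ 0 := List.forall_mem_map.2 fun c hc => (map_ne_zero f).2 (ha c hc)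
  have hlF : ∀ c ∈ l, ∀ s ∈ f.range.toAddSubgroup, c * s ∈ f.range.toAddSubgroup :=
    List.forall_mem_map.2 fun c _ s hs => f.range.mul_mem ⟨c, rfl⟩ hs
  have hφ_ns : (QFClass.mk φ).Nonsingular := .of_baseChange (hφ ▸ hρ.pfisterMul hl)
  have hL := QFClass.hasLagrangian_baseChange hK hφ_ns
  rw [hφ] at hL ⊢
  obtain ⟨w, hw, hwL, hρw⟩ :=
    hρ.exists_hasLagrangian_pfisterMul_eq (QFClass.mul_sq_mem_range hK) hl hlF hL
  obtain ⟨z, rfl⟩ := QFClass.exists_baseChange_eq hK hw hwL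
  obtain ⟨ρ₀, rfl⟩ := Quotient.exists_rep z
  have h := hρw.trans (QFClass.baseChange_pfisterMul f a (QFClass.mk ρ₀)).symm
  exact ⟨ρ₀, hw.of_baseChange, h, h⟩
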